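/- If A is a brick-finite finite-dimensional algebra over an algebraically closed field and A has rank n (i.e. exactly n isomorphism classes of simple A-modules), then every Hom-orthogonal set of finite-dimensional A-modules has at most n elements; in particular, there is no Hom-orthogonal set consisting of n+1 modules. -/

import Mathlib

universe u v

open Module

/-- A finite-dimensional left module over the `k`-algebra `A`. -/
structure FDMod (k A : Type u) [Field k] [Ring A] [Algebra k A] : Type (u + 1) where
  carrier : Type u
  [addCommGroup : AddCommGroup carrier]
  [moduleK : Module k carrier]
  [moduleA : Module A carrier]
  [tower : IsScalarTower k A carrier]
  [fd : FiniteDimensional k carrier]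

attribute [instance] FDMod.addCommGroup FDMod.moduleK FDMod.moduleA FDMod.tower FDMod.fd

variable {k A : Type u} [Field k] [Ring A] [Algebra k A]

/-- `M` is a brick: `M ≠ 0` and every `A`-endomorphism of `M` is a `k`-scalar,
i.e. `End_A(M) ≅ k`. -/
def FDMod.IsBrick (M : FDMod k A) : Prop :=
  Nontrivial M.carrier ∧ ∀ f : M.carrier →ₗ[A] M.carrier, ∃ c : k, ∀ x : M.carrier, f x = c • x

/-- `M` and `N` are Hom-orthogonal: `Hom_A(M,N) = 0` and `Hom_A(N,M) = 0`. -/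
def FDMod.HomOrth (M N : FDMod k A) : Prop :=
  (∀ f : M.carrier →ₗ[A] N.carrier, f = 0) ∧ (∀ f : N.carrier →ₗ[A] M.carrier, f = 0)

/-- `M` and `N` are isomorphic as `A`-modules. -/
def FDMod.Iso (M N : FDMod k A) : Prop :=
  Nonempty (M.carrier ≃ₗ[A] N.carrier)

/-- A family of modules forms a Hom-orthogonal set: the modules are nonzero,
pairwise non-isomorphic and pairwise Hom-orthogonal. -/
def HomOrthFamily {I : Type v} (X : I → FDMod k A) : Prop :=
  (∀ i, Nontrivial (X i).carrier) ∧
  (∀ i j, i ≠ j → ¬(X i).Iso (X j)) ∧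
  (∀ i j, i ≠ j → (X i).HomOrth (X j))

/-- `A` is brick-finite: there are only finitely many isomorphism classes of bricks. -/
def BrickFinite (k A : Type u) [Field k] [Ring A] [Algebra k A] : Prop :=
  ∃ (m : ℕ) (f : Fin m → FDMod k A), ∀ N : FDMod k A, N.IsBrick → ∃ i, N.Iso (f i)

/-- `A` has rank `n`: there are exactly `n` isomorphism classes of simple modules. -/
def HasRank (k A : Type u) [Field k] [Ring A] [Algebra k A] (n : ℕ) : Prop :=
  ∃ S : Fin n → FDMod k A,
    (∀ i, IsSimpleModule A (S i).carrier) ∧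
    (∀ i j, i ≠ j → ¬(S i).Iso (S j)) ∧
    (∀ T : FDMod k A, IsSimpleModule A T.carrier → ∃ i, T.Iso (S i))

namespace HO

section basics

instance finSub (X : FDMod k A) (S : Submodule A X.carrier) : FiniteDimensional k S :=
  Module.Finite.of_injective (S.subtype.restrictScalars k) Subtype.val_injective

instance finQuo (X : FDMod k A) (S : Submodule A X.carrier) :
    FiniteDimensional k (X.carrier ⧸ S) :=
  Module.Finite.of_surjective (S.mkQ.restrictScalars k) S.mkQ_surjective

/-- A submodule as an object. -/
abbrev sub (X : FDMod k A) (S : Submodule A X.carrier) : FDMod k A := ⟨S⟩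

/-- A quotient module as an object. -/
abbrev quo (X : FDMod k A) (S : Submodule A X.carrier) : FDMod k A := ⟨X.carrier ⧸ S⟩

/-- Binary product. -/
abbrev prd (X Y : FDMod k A) : FDMod k A := ⟨X.carrier × Y.carrier⟩

/-- Finite power. -/
abbrev pw (X : FDMod k A) (n : ℕ) : FDMod k A := ⟨Fin n → X.carrier⟩

/-- Dimension. -/
noncomputable abbrev dm (X : FDMod k A) : ℕ := Module.finrank k X.carrier

theorem noeth (X : FDMod k A) : IsNoetherian A X.carrier := isNoetherian_of_tower k inferInstance

theorem artin (X : FDMod k A) : IsArtinian A X.carrier := isArtinian_of_tower k inferInstance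

theorem dm_sub_lt (X : FDMod k A) (S : Submodule A X.carrier) (h : S ≠ ⊤) :
    dm (sub X S) < dm X := by
  have h1 : S.restrictScalars k < ⊤ := lt_top_iff_ne_top.2 (by simpa using h)
  exact Submodule.finrank_lt h1.ne

theorem dm_le_of_surj {X Y : FDMod k A} (f : X.carrier →ₗ[A] Y.carrier)
    (hf : Function.Surjective f) : dm Y ≤ dm X :=
  LinearMap.finrank_le_finrank_of_surjective (f := f.restrictScalars k) hf

theorem surj_of_inj {X : FDMod k A} (f : X.carrier →ₗ[A] X.carrier)
    (hf : Function.Injective f) : Function.Surjective f :=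
  LinearMap.surjective_of_injective (f := f.restrictScalars k) hf

theorem exists_min {α : Type*} (d : α → ℕ) (p : α → Prop) (h : ∃ x, p x) :
    ∃ x, p x ∧ ∀ y, p y → d x ≤ d y := by
  obtain ⟨x, hx, hm⟩ := WellFounded.has_min (measure d).wf {x | p x} h
  exact ⟨x, hx, fun y hy => not_lt.1 (hm y hy)⟩

/-- Torsion classes. -/
structure Tors (T : FDMod k A → Prop) : Prop where
  zero : ∀ X : FDMod k A, Subsingleton X.carrier → T X
  quot : ∀ (X Y : FDMod k A) (f : X.carrier →ₗ[A] Y.carrier), Function.Surjective f → T X → T Y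
  ext : ∀ (X Y Z : FDMod k A) (f : X.carrier →ₗ[A] Y.carrier) (g : Y.carrier →ₗ[A] Z.carrier),
    Function.Surjective g → LinearMap.ker g ≤ LinearMap.range f → T X → T Z → T Y

/-- Right perpendicular. -/
def Perp (T : FDMod k A → Prop) (Y : FDMod k A) : Prop :=
  ∀ Z : FDMod k A, T Z → ∀ f : Z.carrier →ₗ[A] Y.carrier, f = 0

theorem factor {X Y Z : FDMod k A} (g : X.carrier →ₗ[A] Y.carrier) (hg : Function.Surjective g)
    (h : X.carrier →ₗ[A] Z.carrier) (hk : LinearMap.ker g ≤ LinearMap.ker h) :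
    ∃ u : Y.carrier →ₗ[A] Z.carrier, u ∘ₗ g = h := by
  refine ⟨(LinearMap.ker g).liftQ h hk ∘ₗ (g.quotKerEquivOfSurjective hg).symm.toLinearMap, ?_⟩
  ext x
  have : (g.quotKerEquivOfSurjective hg).symm (g x) = (LinearMap.ker g).mkQ x := by
    rw [LinearEquiv.symm_apply_eq]; rfl
  simp [this]

/-- The torsion class of modules without maps to members of a family. -/
def LPerp {ι : Type*} (N : ι → FDMod k A) (X : FDMod k A) : Prop :=
  ∀ (i : ι) (f : X.carrier →ₗ[A] (N i).carrier), f = 0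

theorem tors_lperp {ι : Type*} (N : ι → FDMod k A) : Tors (LPerp N) where
  zero X hX i f := by
    ext x; rw [Subsingleton.elim x 0]; simp
  quot X Y f hf hX i g := by
    have := hX i (g ∘ₗ f)
    ext y; obtain ⟨x, rfl⟩ := hf y
    exact LinearMap.congr_fun this x
  ext X Y Z f g hg hk hX hZ i h := by
    have h1 := hX i (h ∘ₗ f)
    obtain ⟨u, hu⟩ := factor (Z := N i) g hg h (hk.trans (by
      rintro _ ⟨x, rfl⟩; exact LinearMap.congr_fun h1 x))
    rw [← hu, hZ i u, LinearMap.zero_comp]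

theorem tors_and {T T' : FDMod k A → Prop} (h : Tors T) (h' : Tors T') :
    Tors (fun X => T X ∧ T' X) where
  zero X hX := ⟨h.zero X hX, h'.zero X hX⟩
  quot X Y f hf hX := ⟨h.quot X Y f hf hX.1, h'.quot X Y f hf hX.2⟩
  ext X Y Z f g hg hk hX hZ := ⟨h.ext X Y Z f g hg hk hX.1 hZ.1, h'.ext X Y Z f g hg hk hX.2 hZ.2⟩

theorem radical_rel {T : FDMod k A → Prop} (hT : Tors T) (Y : FDMod k A)
    (K : Submodule A Y.carrier) :
    ∃ S : Submodule A Y.carrier, S ≤ K ∧ T (sub Y S) ∧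
      ∀ Z : FDMod k A, T Z → ∀ f : Z.carrier →ₗ[A] (Y.carrier ⧸ S),
        LinearMap.range f ≤ K.map S.mkQ → f = 0 := by
  have := noeth Y
  obtain ⟨S, ⟨hSK, hS⟩, hm⟩ := WellFounded.has_min
    (wellFounded_gt (α := Submodule A Y.carrier)) {S | S ≤ K ∧ T (sub Y S)}
    ⟨⊥, bot_le, hT.zero _ (by change Subsingleton (⊥ : Submodule A Y.carrier); infer_instance)⟩
  refine ⟨S, hSK, hS, fun Z hZ f hfK => ?_⟩
  have hR : T (sub (quo Y S) (LinearMap.range f)) :=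
    hT.quot Z _ f.rangeRestrict f.surjective_rangeRestrict hZ
  set S' : Submodule A Y.carrier := (LinearMap.range f).comap S.mkQ with hS'
  have hle : S ≤ S' := fun x hx => by
    have : S.mkQ x = 0 := by simpa using hx
    rw [hS', Submodule.mem_comap, this]; exact zero_mem _
  have hS'K : S' ≤ K := by
    intro x hx
    obtain ⟨y, hy, hxy⟩ := hfK hx
    have h1 : y - x ∈ S := by
      rw [← Submodule.ker_mkQ S, LinearMap.mem_ker, map_sub, hxy, sub_self]
    have h2 := K.sub_mem hy (hSK h1)
    simpa using h2
  have hTS' : T (sub Y S') := by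
    refine hT.ext (sub Y S) (sub Y S') (sub (quo Y S) (LinearMap.range f))
      (Submodule.inclusion hle) (S.mkQ.restrict (fun x hx => hx)) ?_ ?_ hS hR
    · rintro ⟨y, hy⟩
      obtain ⟨x, rfl⟩ := S.mkQ_surjective y
      exact ⟨⟨x, hy⟩, rfl⟩
    · rintro ⟨x, hx⟩ hx0
      have : S.mkQ x = 0 := congrArg Subtype.val (LinearMap.mem_ker.1 hx0)
      have : x ∈ S := by simpa using this
      exact ⟨⟨x, this⟩, rfl⟩
  have hle' : S' ≤ S := by
    by_contra hc
    exact hm S' ⟨hS'K, hTS'⟩ (lt_of_le_not_ge hle hc)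
  ext z
  obtain ⟨y, hy⟩ := S.mkQ_surjective (f z)
  have : y ∈ S' := by rw [hS', Submodule.mem_comap, hy]; exact ⟨z, rfl⟩
  rw [← hy]
  simpa using hle' this

theorem radical {T : FDMod k A → Prop} (hT : Tors T) (Y : FDMod k A) :
    ∃ S : Submodule A Y.carrier, T (sub Y S) ∧ Perp T (quo Y S) := by
  obtain ⟨S, _, hS, h⟩ := radical_rel hT Y ⊤
  refine ⟨S, hS, fun Z hZ f => h Z hZ f ?_⟩
  rw [Submodule.map_top, Submodule.range_mkQ]
  exact le_top

theorem tors_iso {T : FDMod k A → Prop} (hT : Tors T) {X Y : FDMod k A} (h : X.Iso Y) (hX : T X) :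
    T Y := by
  obtain ⟨e⟩ := h
  exact hT.quot X Y e.toLinearMap e.surjective hX

theorem iso_symm {X Y : FDMod k A} (h : X.Iso Y) : Y.Iso X := by
  obtain ⟨e⟩ := h
  exact ⟨e.symm⟩

theorem perp_sub {T : FDMod k A → Prop} {X Y : FDMod k A} (i : X.carrier →ₗ[A] Y.carrier)
    (hi : Function.Injective i) (hY : Perp T Y) : Perp T X := fun Z hZ f => by
  have := hY Z hZ (i ∘ₗ f)
  ext z
  exact hi (by simpa using LinearMap.congr_fun this z)

/-- Fitting-type lemma. -/
theorem fitting {P X : FDMod k A} (π : P.carrier →ₗ[A] X.carrier) (θ : P.carrier →ₗ[A] P.carrier)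
    (h : π ∘ₗ θ = π) (hθ : ¬ Function.Injective θ) :
    ∃ (R : FDMod k A) (i : R.carrier →ₗ[A] P.carrier) (r : P.carrier →ₗ[A] R.carrier),
      r ∘ₗ i = LinearMap.id ∧ π ∘ₗ i ∘ₗ r = π ∧ dm R < dm P := by
  have := noeth P
  have := artin P
  obtain ⟨n, hn, hn1⟩ := ((LinearMap.eventually_isCompl_ker_pow_range_pow θ).and
    (Filter.eventually_ge_atTop 1)).exists
  have hπ : ∀ m : ℕ, ∀ x, π ((θ ^ m) x) = π x := by
    intro m
    induction m with
    | zero => intro x; simp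
    | succ m ih => intro x; rw [pow_succ, Module.End.mul_apply, ih]; exact LinearMap.congr_fun h x
  have hc := hn.symm
  refine ⟨sub P (LinearMap.range (θ ^ n)), Submodule.subtype _,
    Submodule.projectionOnto _ _ hc, ?_, ?_, ?_⟩
  · exact Submodule.projectionOnto_comp_subtype hc
  · ext x
    have hx : x - (Submodule.projectionOnto _ _ hc x : P.carrier) ∈ LinearMap.ker (θ ^ n) := by
      rw [← Submodule.projectionOnto_apply_eq_zero_iff hc, map_sub,
        Submodule.projectionOnto_apply_left, sub_self]
    have h2 := hπ n (x - (Submodule.projectionOnto _ _ hc x : P.carrier))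
    rw [LinearMap.mem_ker.1 hx, map_zero, map_sub] at h2
    exact (sub_eq_zero.1 h2.symm).symm
  · apply dm_sub_lt
    intro htop
    apply hθ
    have h3 : LinearMap.ker (θ ^ n) = ⊥ := by
      have := hn.inf_eq_bot
      rwa [htop, inf_top_eq] at this
    rw [← LinearMap.ker_eq_bot, eq_bot_iff, ← h3]
    intro x hx
    obtain ⟨m, rfl⟩ : ∃ m, n = m + 1 := ⟨n - 1, by omega⟩
    rw [LinearMap.mem_ker, pow_succ, Module.End.mul_apply, LinearMap.mem_ker.1 hx, map_zero]

theorem exists_brick [IsAlgClosed k] (X : FDMod k A) (hX : Nontrivial X.carrier) :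
    ∃ (B : FDMod k A) (p : X.carrier →ₗ[A] B.carrier) (i : B.carrier →ₗ[A] X.carrier),
      B.IsBrick ∧ Function.Surjective p ∧ Function.Injective i := by
  obtain ⟨f, hf, hmin⟩ := exists_min
    (fun f : X.carrier →ₗ[A] X.carrier => dm (sub X (LinearMap.range f))) (fun f => f ≠ 0)
    ⟨LinearMap.id, fun h => by
      obtain ⟨x, hx⟩ := exists_ne (0 : X.carrier)
      exact hx (LinearMap.congr_fun h x)⟩
  have hnt : Nontrivial (LinearMap.range f) := by
    rw [Submodule.nontrivial_iff_ne_bot]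
    intro h
    exact hf (LinearMap.range_eq_bot.1 h)
  refine ⟨sub X (LinearMap.range f), f.rangeRestrict, Submodule.subtype _, ⟨hnt, fun e => ?_⟩,
    f.surjective_rangeRestrict, Subtype.val_injective⟩
  obtain ⟨c, hc⟩ := Module.End.exists_eigenvalue (K := k) (e.restrictScalars k)
  obtain ⟨v, hv⟩ := hc.exists_hasEigenvector
  refine ⟨c, ?_⟩
  set e' : (sub X (LinearMap.range f)).carrier →ₗ[A] (sub X (LinearMap.range f)).carrier :=
    e - c • LinearMap.id with he'
  have hv0 : e' v = 0 := by
    have : e v = c • v := hv.apply_eq_smul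
    simp [he', this]
  have hlt : dm (sub (sub X (LinearMap.range f)) (LinearMap.range e')) <
      dm (sub X (LinearMap.range f)) := by
    apply dm_sub_lt
    intro ht
    have hs : Function.Surjective e' := LinearMap.range_eq_top.1 ht
    have hi : Function.Injective e' :=
      LinearMap.injective_iff_surjective (f := e'.restrictScalars k).2 hs
    exact hv.2 (hi (by simpa using hv0))
  set g : X.carrier →ₗ[A] X.carrier := (Submodule.subtype _) ∘ₗ e' ∘ₗ f.rangeRestrict with hg
  have hle : dm (sub X (LinearMap.range g)) ≤
      dm (sub (sub X (LinearMap.range f)) (LinearMap.range e')) := by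
    refine dm_le_of_surj (X := sub (sub X (LinearMap.range f)) (LinearMap.range e'))
      (Y := sub X (LinearMap.range g)) ((Submodule.subtype _).restrict ?_) ?_
    · rintro _ ⟨⟨_, x, rfl⟩, rfl⟩
      exact ⟨x, rfl⟩
    · rintro ⟨_, x, rfl⟩
      exact ⟨⟨e' (f.rangeRestrict x), ⟨_, rfl⟩⟩, rfl⟩
  have hg0 : g = 0 := by
    by_contra hne
    have := hmin g hne
    omega
  intro y
  obtain ⟨x, rfl⟩ := f.surjective_rangeRestrict y
  have h1 : e' (f.rangeRestrict x) = 0 := Subtype.ext (LinearMap.congr_fun hg0 x)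
  rw [he', LinearMap.sub_apply, sub_eq_zero] at h1
  exact h1

theorem finite_tors [IsAlgClosed k] (hbf : BrickFinite k A) :
    {T : FDMod k A → Prop | Tors T}.Finite := by
  obtain ⟨m, f, hf⟩ := hbf
  have key : ∀ T T' : FDMod k A → Prop, Tors T → Tors T' → {i | T (f i)} = {i | T' (f i)} →
      ∀ X, T X → T' X := by
    intro T T' hT hT' he X hX
    obtain ⟨S, hS, hp⟩ := radical hT' X
    by_cases htop : S = ⊤
    · subst htop
      exact hT'.quot (sub X ⊤) X (Submodule.subtype ⊤) (fun x => ⟨⟨x, trivial⟩, rfl⟩) hS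
    · exfalso
      have hnt : Nontrivial (quo X S).carrier := Submodule.Quotient.nontrivial_iff.2 htop
      obtain ⟨B, p, i, hB, hps, hi⟩ := exists_brick (quo X S) hnt
      have h1 : T B := hT.quot _ B (p ∘ₗ S.mkQ) (hps.comp S.mkQ_surjective) hX
      obtain ⟨j, hj⟩ := hf B hB
      have h2 : j ∈ {i | T (f i)} := tors_iso hT hj h1
      rw [he] at h2
      have h3 : T' B := tors_iso hT' (iso_symm hj) h2
      have h4 := hp B h3 i
      obtain ⟨b, hb⟩ := @exists_ne _ hB.1 (0 : B.carrier)
      exact hb (hi (by rw [h4]; simp))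
  refine Set.Finite.of_injOn (t := Set.univ) (f := fun T => {i | T (f i)}) (fun _ _ => trivial) ?_
    Set.finite_univ
  intro T hT T' hT' he
  funext X
  exact propext ⟨key T T' hT hT' he X, key T' T hT' hT he.symm X⟩

end basics

section proj

/-- Ext-projectivity with respect to a class `T`, phrased as a lifting property. -/
def EP (T : FDMod k A → Prop) (P : FDMod k A) : Prop :=
  ∀ (Y Z : FDMod k A) (g : Y.carrier →ₗ[A] Z.carrier), Function.Surjective g →
    T (sub Y (LinearMap.ker g)) → ∀ h : P.carrier →ₗ[A] Z.carrier,
      ∃ h' : P.carrier →ₗ[A] Y.carrier, g ∘ₗ h' = h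

/-- Enough Ext-projectives. -/
def Enough (T : FDMod k A → Prop) : Prop :=
  ∀ X : FDMod k A, T X → ∃ (P : FDMod k A) (p : P.carrier →ₗ[A] X.carrier),
    T P ∧ EP T P ∧ Function.Surjective p ∧ T (sub P (LinearMap.ker p))

theorem EP.retract {T : FDMod k A → Prop} {P R : FDMod k A} (hP : EP T P)
    (i : R.carrier →ₗ[A] P.carrier) (r : P.carrier →ₗ[A] R.carrier)
    (h : r ∘ₗ i = LinearMap.id) : EP T R := by
  intro Y Z g hg hk f
  obtain ⟨f', hf'⟩ := hP Y Z g hg hk (f ∘ₗ r)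
  refine ⟨f' ∘ₗ i, ?_⟩
  rw [← LinearMap.comp_assoc, hf', LinearMap.comp_assoc, h, LinearMap.comp_id]

theorem EP.mono {T T' : FDMod k A → Prop} (h : ∀ X, T' X → T X) {P : FDMod k A} (hP : EP T P) :
    EP T' P := fun Y Z g hg hk f => hP Y Z g hg (h _ hk) f

theorem EP.prd {T : FDMod k A → Prop} {P Q : FDMod k A} (hP : EP T P) (hQ : EP T Q) :
    EP T (prd P Q) := by
  intro Y Z g hg hk f
  obtain ⟨a, ha⟩ := hP Y Z g hg hk (f ∘ₗ LinearMap.inl A _ _)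
  obtain ⟨b, hb⟩ := hQ Y Z g hg hk (f ∘ₗ LinearMap.inr A _ _)
  refine ⟨LinearMap.coprod a b, ?_⟩
  rw [LinearMap.comp_coprod, ha, hb]
  exact LinearMap.coprod_comp_inl_inr f

theorem EP.pw {T : FDMod k A → Prop} {P : FDMod k A} (hP : EP T P) (n : ℕ) :
    EP T (pw P n) := by
  intro Y Z g hg hk f
  choose a ha using fun j : Fin n => hP Y Z g hg hk (f ∘ₗ LinearMap.single A (fun _ => P.carrier) j)
  refine ⟨LinearMap.lsum A (fun _ => P.carrier) ℕ a, ?_⟩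
  apply LinearMap.pi_ext'
  intro j
  rw [← ha j]
  ext x
  simp [LinearMap.lsum_apply, Pi.single_apply, apply_ite]

theorem Tors.prd {T : FDMod k A → Prop} (hT : Tors T) {P Q : FDMod k A} (hP : T P) (hQ : T Q) :
    T (prd P Q) :=
  hT.ext P _ Q (LinearMap.inl A _ _) (LinearMap.snd A _ _) (fun y => ⟨(0, y), rfl⟩)
    (by rw [LinearMap.range_inl]) hP hQ

theorem Tors.pw {T : FDMod k A → Prop} (hT : Tors T) {P : FDMod k A} (hP : T P) (n : ℕ) :
    T (pw P n) := by
  induction n with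
  | zero => exact hT.zero _ (by change Subsingleton (Fin 0 → P.carrier); infer_instance)
  | succ n ih =>
    refine hT.quot (HO.prd P (HO.pw P n)) _ (Fin.consLinearEquiv A (fun _ => P.carrier)).toLinearMap
      (LinearEquiv.surjective _) (hT.prd hP ih)

theorem enough_of_proj [FiniteDimensional k A] : Enough (fun _ : FDMod k A => True) := by
  intro X _
  have : Module.Finite A X.carrier := Module.Finite.of_restrictScalars_finite k A X.carrier
  obtain ⟨n, f, hf⟩ := Module.Finite.exists_fin' A X.carrier
  refine ⟨⟨Fin n → A⟩, f, trivial, ?_, hf, trivial⟩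
  intro Y Z g hg _ h
  exact Module.projective_lifting_property g h hg

/-- Quotients of powers of `U`. -/
def Fac (U X : FDMod k A) : Prop :=
  ∃ (n : ℕ) (p : (Fin n → U.carrier) →ₗ[A] X.carrier), Function.Surjective p

theorem fac_single {U X : FDMod k A} (p : U.carrier →ₗ[A] X.carrier) (hp : Function.Surjective p) :
    Fac U X :=
  ⟨1, p ∘ₗ LinearMap.proj 0, hp.comp (fun x => ⟨fun _ => x, rfl⟩)⟩

theorem fac_le {T : FDMod k A → Prop} (hT : Tors T) {U X : FDMod k A} (hU : T U) (h : Fac U X) :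
    T X := by
  obtain ⟨n, p, hp⟩ := h
  exact hT.quot (pw U n) X p hp (hT.pw hU n)

theorem fac_prd {U X Y : FDMod k A} (hX : Fac U X) (hY : Fac U Y) : Fac U (prd X Y) := by
  obtain ⟨n, p, hp⟩ := hX
  obtain ⟨m, q, hq⟩ := hY
  refine ⟨n + m, LinearMap.prod (p ∘ₗ LinearMap.funLeft A U.carrier (Fin.castAdd m))
    (q ∘ₗ LinearMap.funLeft A U.carrier (Fin.natAdd n)), ?_⟩
  rintro ⟨x, y⟩
  obtain ⟨a, rfl⟩ := hp x
  obtain ⟨b, rfl⟩ := hq y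
  refine ⟨Fin.append a b, ?_⟩
  have h1 : LinearMap.funLeft A U.carrier (Fin.castAdd m) (Fin.append a b) = a := by
    funext i; simp [LinearMap.funLeft_apply]
  have h2 : LinearMap.funLeft A U.carrier (Fin.natAdd n) (Fin.append a b) = b := by
    funext i; simp [LinearMap.funLeft_apply]
  simp [h1, h2]

theorem fac_tors {T : FDMod k A → Prop} (hT : Tors T) {U : FDMod k A} (hU : T U) (hE : EP T U) :
    Tors (Fac U) where
  zero X hX := ⟨0, 0, fun x => ⟨0, Subsingleton.elim _ _⟩⟩
  quot X Y f hf := by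
    rintro ⟨n, p, hp⟩
    exact ⟨n, f ∘ₗ p, hf.comp hp⟩
  ext X Y Z f g hg hk hX hZ := by
    have hTX := fac_le hT hU hX
    obtain ⟨m, q, hq⟩ := hZ
    have hker : T (sub Y (LinearMap.range f)) :=
      hT.quot X _ f.rangeRestrict f.surjective_rangeRestrict hTX
    -- lift `q` modulo the range of `f`
    obtain ⟨u, hu⟩ := factor (X := Y) (Y := Z) (Z := quo Y (LinearMap.range f)) g hg
      (LinearMap.range f).mkQ (by rw [Submodule.ker_mkQ]; exact hk)
    obtain ⟨q', hq'⟩ := hE.pw m Y (quo Y (LinearMap.range f)) (LinearMap.range f).mkQ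
      (Submodule.mkQ_surjective _) (by rw [Submodule.ker_mkQ]; exact hker) (u ∘ₗ q)
    have h2 : Fac U (HO.prd X (HO.pw U m)) := fac_prd hX ⟨m, LinearMap.id, Function.surjective_id⟩
    obtain ⟨n, p, hp⟩ := h2
    suffices hs : Function.Surjective (LinearMap.coprod f q') from
      ⟨n, (LinearMap.coprod f q') ∘ₗ p, hs.comp hp⟩
    intro y
    obtain ⟨w, hw⟩ := hq (g y)
    have h3 : (LinearMap.range f).mkQ (y - q' w) = 0 := by
      have h4 := LinearMap.congr_fun hq' w
      have h5 := LinearMap.congr_fun hu y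
      simp only [LinearMap.comp_apply] at h4 h5
      rw [map_sub, h4, hw, h5, sub_self]
    have h6 : y - q' w ∈ LinearMap.range f := by
      rw [← Submodule.ker_mkQ (LinearMap.range f)]; exact h3
    obtain ⟨x, hx⟩ := h6
    refine ⟨(x, w), ?_⟩
    rw [LinearMap.coprod_apply, hx, sub_add_cancel]

end proj

section step

instance finHom (X Y : FDMod k A) : FiniteDimensional k (X.carrier →ₗ[A] Y.carrier) :=
  Module.Finite.of_injective (LinearMap.restrictScalarsₗ k A X.carrier Y.carrier k)
    (LinearMap.restrictScalars_injective k)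

theorem approx_elt (U : FDMod k A) : ∃ (r : ℕ) (u : Fin r → U.carrier),
    ∀ X : FDMod k A, Fac U X → ∀ x : X.carrier,
      ∃ g : (Fin r → U.carrier) →ₗ[A] X.carrier, g u = x := by
  let b := Module.finBasis k U.carrier
  refine ⟨_, b, ?_⟩
  rintro X ⟨n, p, hp⟩ x
  obtain ⟨v, rfl⟩ := hp x
  refine ⟨p ∘ₗ LinearMap.pi (fun i => ∑ j, b.repr (v i) j • LinearMap.proj j), ?_⟩
  rw [LinearMap.comp_apply]
  congr 1
  funext i
  simp only [LinearMap.pi_apply, LinearMap.sum_apply, LinearMap.smul_apply, LinearMap.proj_apply]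
  exact b.sum_repr (v i)

theorem enough_of_fac {T : FDMod k A → Prop} (hT : Tors T) {U : FDMod k A} (hU : T U)
    (hE : EP T U) (hgen : ∀ X, T X → Fac U X) : Enough T := by
  obtain ⟨r, u, hu⟩ := approx_elt U
  set N : Submodule A (pw U r).carrier := Submodule.span A {u} with hN
  set C : FDMod k A := quo (pw U r) N with hC
  have hTU : T (pw U r) := hT.pw hU r
  have hTC : T C := hT.quot _ _ N.mkQ N.mkQ_surjective hTU
  have huN : N.mkQ u = 0 := by
    rw [Submodule.mkQ_apply, Submodule.Quotient.mk_eq_zero]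
    exact Submodule.mem_span_singleton_self u
  have hfac : ∀ (X : FDMod k A) (f : (Fin r → U.carrier) →ₗ[A] X.carrier), f u = 0 →
      ∃ f' : C.carrier →ₗ[A] X.carrier, f' ∘ₗ N.mkQ = f := by
    intro X f hf
    refine ⟨N.liftQ f ?_, N.liftQ_mkQ f _⟩
    rw [hN, Submodule.span_le]
    rintro _ rfl
    exact hf
  have hEC : EP T C := by
    intro Y Z g hg hk h
    obtain ⟨w, hw⟩ := hE.pw r Y Z g hg hk (h ∘ₗ N.mkQ)
    have hwu : w u ∈ LinearMap.ker g := by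
      have := LinearMap.congr_fun hw u
      simp only [LinearMap.comp_apply] at this
      rw [LinearMap.mem_ker, this, huN, map_zero]
    obtain ⟨v, hv⟩ := hu (sub Y (LinearMap.ker g)) (hgen _ hk) ⟨w u, hwu⟩
    obtain ⟨w', hw'⟩ := hfac Y (w - (LinearMap.ker g).subtype ∘ₗ v) (by
      rw [LinearMap.sub_apply, LinearMap.comp_apply, hv]; simp)
    refine ⟨w', LinearMap.ext fun y => ?_⟩
    obtain ⟨x, rfl⟩ := N.mkQ_surjective y
    have h1 := LinearMap.congr_fun hw' x
    have h2 := LinearMap.congr_fun hw x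
    have h3 : g (v x : Y.carrier) = 0 := (v x).2
    simp only [LinearMap.comp_apply, LinearMap.sub_apply, Submodule.subtype_apply] at h1 h2 ⊢
    rw [h1, map_sub, h3, sub_zero, h2]
  set P : FDMod k A := prd U C with hP
  have hTP : T P := hT.prd hU hTC
  have hEP : EP T P := hE.prd hEC
  intro X hX
  let b := Module.finBasis k (P.carrier →ₗ[A] X.carrier)
  set s := Module.finrank k (P.carrier →ₗ[A] X.carrier)
  let p : (pw P s).carrier →ₗ[A] X.carrier := ∑ j, b j ∘ₗ LinearMap.proj j
  have hp : ∀ f : P.carrier →ₗ[A] X.carrier,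
      ∃ f' : P.carrier →ₗ[A] (pw P s).carrier, p ∘ₗ f' = f := by
    intro f
    refine ⟨LinearMap.pi (fun j => b.repr f j • LinearMap.id), ?_⟩
    have h := b.sum_repr f
    refine LinearMap.ext fun x => ?_
    have h2 := LinearMap.congr_fun h x
    rw [LinearMap.sum_apply] at h2
    simp [p]
    exact h2
  have hpC : ∀ h : C.carrier →ₗ[A] X.carrier,
      ∃ h' : C.carrier →ₗ[A] (pw P s).carrier, p ∘ₗ h' = h := by
    intro h
    obtain ⟨f', hf'⟩ := hp (h ∘ₗ LinearMap.snd A _ _)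
    refine ⟨f' ∘ₗ LinearMap.inr A _ _, ?_⟩
    rw [← LinearMap.comp_assoc, hf', LinearMap.comp_assoc, LinearMap.snd_comp_inr,
      LinearMap.comp_id]
  have hpU : ∀ h : U.carrier →ₗ[A] X.carrier, LinearMap.range h ≤ LinearMap.range p := by
    intro h
    obtain ⟨f', hf'⟩ := hp (h ∘ₗ LinearMap.fst A _ _)
    rintro _ ⟨x, rfl⟩
    exact ⟨f' (x, 0), LinearMap.congr_fun hf' (x, 0)⟩
  have hsurj : Function.Surjective p := by
    intro x
    obtain ⟨g, rfl⟩ := hu X (hgen X hX) x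
    change g u ∈ LinearMap.range p
    have : g u = ∑ j, (g ∘ₗ LinearMap.single A (fun _ => U.carrier) j) (u j) := by
      conv_lhs => rw [← Finset.univ_sum_single u]
      rw [map_sum]
      rfl
    rw [this]
    exact Submodule.sum_mem _ (fun j _ => hpU _ ⟨_, rfl⟩)
  refine ⟨pw P s, p, hT.pw hTP s, hEP.pw s, hsurj, ?_⟩
  obtain ⟨S, hSK, hS, hrad⟩ := radical_rel hT (pw P s) (LinearMap.ker p)
  have hKS : LinearMap.ker p ≤ S := by
    intro y hy
    obtain ⟨g, hg⟩ := hu (pw P s) (hgen _ (hT.pw hTP s)) y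
    obtain ⟨h, hh⟩ := hfac X (p ∘ₗ g) (by rw [LinearMap.comp_apply, hg]; exact hy)
    obtain ⟨h', hh'⟩ := hpC h
    have h0 := hrad (pw U r) hTU (S.mkQ ∘ₗ (g - h' ∘ₗ N.mkQ)) (by
      rintro _ ⟨x, rfl⟩
      refine ⟨(g - h' ∘ₗ N.mkQ) x, ?_, rfl⟩
      have h1 := LinearMap.congr_fun hh x
      have h2 := LinearMap.congr_fun hh' (N.mkQ x)
      simp only [LinearMap.comp_apply] at h1 h2
      change p ((g - h' ∘ₗ N.mkQ) x) = 0
      rw [LinearMap.sub_apply, LinearMap.comp_apply, map_sub, h2, h1, sub_self])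
    have h3 := LinearMap.congr_fun h0 u
    rw [LinearMap.comp_apply, LinearMap.sub_apply, LinearMap.comp_apply, huN, map_zero, sub_zero,
      hg] at h3
    rw [← Submodule.ker_mkQ S]
    exact h3
  have : S = LinearMap.ker p := le_antisymm hSK hKS
  rw [← this]
  exact hS

theorem step {T T1 : FDMod k A → Prop} (hT : Tors T) (h1 : Tors T1) (hle : ∀ X, T1 X → T X)
    (hne : ∃ X, T X ∧ ¬ T1 X)
    (hmax : ∀ T2 : FDMod k A → Prop, Tors T2 → (∀ X, T1 X → T2 X) → (∀ X, T2 X → T X) →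
      (∃ X, T X ∧ ¬ T2 X) → ∀ X, T2 X → T1 X)
    (hE : Enough T) (hfin : {T : FDMod k A → Prop | Tors T}.Finite) : Enough T1 := by
  have star : ∀ Y : FDMod k A, T Y → Perp T1 Y → Nontrivial Y.carrier → ∀ Z : FDMod k A, T Z →
      (∀ f : Z.carrier →ₗ[A] Y.carrier, f = 0) → T1 Z := by
    intro Y hY hp hn Z hZ hf
    refine hmax (fun X => T X ∧ LPerp (fun _ : Unit => Y) X) (tors_and hT (tors_lperp _))
      (fun X hX => ⟨hle X hX, fun _ f => hp X hX f⟩) (fun X hX => hX.1) ⟨Y, hY, fun h => ?_⟩ Z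
      ⟨hZ, fun _ f => hf f⟩
    obtain ⟨y, hy⟩ := exists_ne (0 : Y.carrier)
    exact hy (LinearMap.congr_fun (h.2 () LinearMap.id) y)
  obtain ⟨B, ⟨hTB, hpB, hnB⟩, hminB⟩ := exists_min (fun B : FDMod k A => dm B)
    (fun B => T B ∧ Perp T1 B ∧ Nontrivial B.carrier) (by
      obtain ⟨X, hX, hX1⟩ := hne
      obtain ⟨S, hS, hp⟩ := radical h1 X
      refine ⟨quo X S, hT.quot X _ S.mkQ S.mkQ_surjective hX, hp, ?_⟩
      apply Submodule.Quotient.nontrivial_iff.2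
      rintro rfl
      exact hX1 (h1.quot (sub X ⊤) X (Submodule.subtype ⊤) (fun x => ⟨⟨x, trivial⟩, rfl⟩) hS))
  have hB1 : ¬ T1 B := by
    intro h
    obtain ⟨y, hy⟩ := exists_ne (0 : B.carrier)
    exact hy (LinearMap.congr_fun (hpB B h LinearMap.id) y)
  have surjB : ∀ Y : FDMod k A, T Y → ∀ φ : Y.carrier →ₗ[A] B.carrier, φ ≠ 0 →
      Function.Surjective φ := by
    intro Y hY φ hφ
    rw [← LinearMap.range_eq_top]
    by_contra hc
    have h2 := dm_sub_lt B _ hc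
    have h3 := hminB (sub B (LinearMap.range φ))
      ⟨hT.quot Y _ φ.rangeRestrict φ.surjective_rangeRestrict hY,
        perp_sub (Y := B) (Submodule.subtype _) Subtype.val_injective hpB,
        (Submodule.nontrivial_iff_ne_bot).2 (fun h => hφ (LinearMap.range_eq_bot.1 h))⟩
    omega
  have kerB : ∀ Y : FDMod k A, T Y → ∀ φ : Y.carrier →ₗ[A] B.carrier, φ ≠ 0 →
      T (sub Y (LinearMap.ker φ)) := by
    intro Y hY φ hφ
    obtain ⟨S, hSK, hS, hrad⟩ := radical_rel hT Y (LinearMap.ker φ)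
    set φ' : (quo Y S).carrier →ₗ[A] B.carrier := S.liftQ φ hSK with hφ'
    have hTY' : T (quo Y S) := hT.quot Y _ S.mkQ S.mkQ_surjective hY
    have hz : ∀ Z : FDMod k A, T Z → ∀ f : Z.carrier →ₗ[A] (quo Y S).carrier,
        φ' ∘ₗ f = 0 → f = 0 := by
      intro Z hZ f hf
      refine hrad Z hZ f ?_
      rintro _ ⟨z, rfl⟩
      obtain ⟨y, hy⟩ := S.mkQ_surjective (f z)
      refine ⟨y, ?_, hy⟩
      have h2 : φ' (f z) = 0 := LinearMap.congr_fun hf z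
      rw [← hy, hφ', Submodule.mkQ_apply, Submodule.liftQ_apply] at h2
      exact h2
    have hsur : Function.Surjective φ' := by
      intro y
      obtain ⟨x, rfl⟩ := surjB Y hY φ hφ y
      exact ⟨S.mkQ x, by rw [hφ', Submodule.mkQ_apply, Submodule.liftQ_apply]⟩
    have hn : Nontrivial (quo Y S).carrier := hsur.nontrivial
    have hp : Perp T1 (quo Y S) := fun Z hZ f => hz Z (hle Z hZ) f (hpB Z hZ _)
    obtain ⟨β, hβ⟩ : ∃ β : B.carrier →ₗ[A] (quo Y S).carrier, β ≠ 0 := by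
      by_contra hc
      push Not at hc
      exact hB1 (star (quo Y S) hTY' hp hn B hTB hc)
    have hφβ : φ' ∘ₗ β ≠ 0 := fun h => hβ (hz B hTB β h)
    have hs := surjB B hTB _ hφβ
    have hi : Function.Injective (φ' ∘ₗ β) :=
      LinearMap.injective_iff_surjective (f := (φ' ∘ₗ β).restrictScalars k).2 hs
    let e := LinearEquiv.ofBijective (φ' ∘ₗ β) ⟨hi, hs⟩
    have h0 := hz (quo Y S) hTY' (LinearMap.id - β ∘ₗ e.symm.toLinearMap ∘ₗ φ') (by
      ext y
      have h4 : φ' (β (e.symm (φ' (S.mkQ y)))) = φ' (S.mkQ y) := e.apply_symm_apply _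
      change φ' (S.mkQ y - β (e.symm (φ' (S.mkQ y)))) = 0
      rw [map_sub, h4, sub_self])
    have hKS : LinearMap.ker φ ≤ S := by
      intro y hy
      have h5 := LinearMap.congr_fun h0 (S.mkQ y)
      have h6 : φ' (S.mkQ y) = 0 := by
        rw [hφ', Submodule.mkQ_apply, Submodule.liftQ_apply]; exact hy
      change S.mkQ y - β (e.symm (φ' (S.mkQ y))) = 0 at h5
      rw [h6, map_zero, map_zero, sub_zero] at h5
      rw [← Submodule.ker_mkQ S]
      exact h5
    have : S = LinearMap.ker φ := le_antisymm hSK hKS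
    rw [← this]
    exact hS
  have claim : ∀ X : FDMod k A, T1 X → ∃ (P : FDMod k A) (p : P.carrier →ₗ[A] X.carrier),
      T1 P ∧ EP T P ∧ Function.Surjective p := by
    intro X hX
    obtain ⟨P, ⟨π, hTP, hEP, hπ, hK⟩, hmin⟩ := exists_min (fun P : FDMod k A => dm P)
      (fun P => ∃ p : P.carrier →ₗ[A] X.carrier,
        T P ∧ EP T P ∧ Function.Surjective p ∧ T (sub P (LinearMap.ker p))) (hE X (hle X hX))
    refine ⟨P, π, ?_, hEP, hπ⟩
    refine star B hTB hpB hnB P hTP (fun φ => ?_)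
    by_contra hφ
    set ι := (LinearMap.ker π).subtype with hι
    have hφK : φ ∘ₗ ι ≠ 0 := by
      intro h
      obtain ⟨w, hw⟩ := factor (X := P) (Y := X) (Z := B) π hπ φ
        (fun x hx => LinearMap.congr_fun h ⟨x, hx⟩)
      have hX0 : w = 0 := hpB X hX w
      exact hφ (by rw [← hw, hX0, LinearMap.zero_comp])
    obtain ⟨ψ, hψ⟩ := hEP (sub P (LinearMap.ker π)) B (φ ∘ₗ ι) (surjB _ hK _ hφK)
      (kerB _ hK _ hφK) φ
    set θ : P.carrier →ₗ[A] P.carrier := LinearMap.id - ι ∘ₗ ψ with hθ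
    have hπθ : π ∘ₗ θ = π := by
      ext x
      have : π (ψ x : P.carrier) = 0 := (ψ x).2
      simp [hθ, hι, this]
    have hφθ : φ ∘ₗ θ = 0 := by
      ext x
      have := LinearMap.congr_fun hψ x
      simp only [LinearMap.comp_apply] at this
      simp [hθ, this]
    have hni : ¬ Function.Injective θ := by
      intro hi
      apply hφ
      ext x
      obtain ⟨y, rfl⟩ := surj_of_inj θ hi x
      exact LinearMap.congr_fun hφθ y
    obtain ⟨R, i, r, hri, hπr, hlt⟩ := fitting π θ hπθ hni
    have hrs : Function.Surjective r := fun x => ⟨i x, LinearMap.congr_fun hri x⟩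
    have hπr' : ∀ x, π (i (r x)) = π x := fun x => LinearMap.congr_fun hπr x
    have := hmin R ⟨π ∘ₗ i, hT.quot P R r hrs hTP, hEP.retract i r hri, ?_, ?_⟩
    · omega
    · intro x
      obtain ⟨y, rfl⟩ := hπ x
      exact ⟨r y, hπr' y⟩
    · refine hT.quot (sub P (LinearMap.ker π)) (sub R (LinearMap.ker (π ∘ₗ i)))
        (r.restrict (fun x hx => (hπr' x).trans hx)) ?_ hK
      rintro ⟨x, hx⟩
      exact ⟨⟨i x, hx⟩, Subtype.ext (LinearMap.congr_fun hri x)⟩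
  -- choose a maximal generator
  obtain ⟨F, hF⟩ := Set.Finite.exists_maximal
    (s := {F : FDMod k A → Prop | ∃ U, T1 U ∧ EP T U ∧ F = Fac U})
    (hfin.subset (by rintro _ ⟨U, hU, hEU, rfl⟩; exact fac_tors hT (hle U hU) hEU)) (by
      obtain ⟨P, p, hP, hEP, _⟩ := claim ⟨PUnit⟩ (h1.zero _ (by
        change Subsingleton PUnit; infer_instance))
      exact ⟨_, P, hP, hEP, rfl⟩)
  obtain ⟨⟨U, hU, hEU, rfl⟩, hUmax⟩ := hF
  refine enough_of_fac h1 hU (hEU.mono hle) (fun X hX => ?_)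
  obtain ⟨P, p, hP, hEP, hp⟩ := claim X hX
  have hUP : T1 (prd U P) := h1.prd hU hP
  have hEUP : EP T (prd U P) := hEU.prd hEP
  have htors := fac_tors hT (hle _ hUP) hEUP
  refine hUmax ⟨prd U P, hUP, hEUP, rfl⟩ (fun Z hZ => ?_) X
    (fac_single (U := prd U P) (p ∘ₗ LinearMap.snd A _ _) (hp.comp (fun y => ⟨(0, y), rfl⟩)))
  exact fac_le htors (fac_single (U := prd U P) (X := U) (LinearMap.fst A _ _)
    (fun y => ⟨(y, 0), rfl⟩)) hZ

theorem enough_all [FiniteDimensional k A] (hfin : {T : FDMod k A → Prop | Tors T}.Finite)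
    {T : FDMod k A → Prop} (hT : Tors T) : Enough T := by
  obtain ⟨T', ⟨hT', hle, hE⟩, hmin⟩ := Set.Finite.exists_minimal
    (s := {T' : FDMod k A → Prop | Tors T' ∧ T ≤ T' ∧ Enough T'})
    (hfin.subset (fun _ h => h.1))
    ⟨fun _ => True, ⟨fun _ _ => trivial, fun _ _ _ _ _ => trivial,
      fun _ _ _ _ _ _ _ _ _ => trivial⟩, fun _ _ => trivial, enough_of_proj⟩
  by_cases h : T' ≤ T
  · rwa [le_antisymm h hle] at hE
  · exfalso
    obtain ⟨T1, ⟨h1, hle1, hle2, hn⟩, hmax⟩ := Set.Finite.exists_maximal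
      (s := {T1 : FDMod k A → Prop | Tors T1 ∧ T ≤ T1 ∧ T1 ≤ T' ∧ ¬ T' ≤ T1})
      (hfin.subset (fun _ h => h.1)) ⟨T, hT, le_rfl, hle, h⟩
    have hcon : ∀ T2 : FDMod k A → Prop, (¬ T' ≤ T2) ↔ ∃ X, T' X ∧ ¬ T2 X := by
      intro T2
      constructor
      · intro h
        by_contra hc
        push Not at hc
        exact h hc
      · rintro ⟨X, hX, hX2⟩ h
        exact hX2 (h X hX)
    have := step hT' h1 hle2 ((hcon T1).1 hn) (fun T2 h2 hl1 hl2 hx =>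
      hmax ⟨h2, hle1.trans hl1, hl2, (hcon T2).2 hx⟩ hl1) hE hfin
    exact hn (hmin ⟨h1, hle1, this⟩ hle2)

end step

section final

theorem proj_cover [FiniteDimensional k A] (W : FDMod k A) :
    ∃ (P : FDMod k A) (ρ : P.carrier →ₗ[A] W.carrier), Module.Projective A P.carrier ∧
      Function.Surjective ρ ∧ ∀ (X : FDMod k A) (g : P.carrier →ₗ[A] X.carrier),
        (LinearMap.ker ρ).map g = LinearMap.range g → g = 0 := by
  have : Module.Finite A W.carrier := Module.Finite.of_restrictScalars_finite k A W.carrier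
  obtain ⟨P, ⟨ρ, hP, hρ⟩, hmin⟩ := exists_min (fun P : FDMod k A => dm P)
    (fun P => ∃ ρ : P.carrier →ₗ[A] W.carrier, Module.Projective A P.carrier ∧
      Function.Surjective ρ) (by
        obtain ⟨n, f, hf⟩ := Module.Finite.exists_fin' A W.carrier
        exact ⟨⟨Fin n → A⟩, f, (inferInstance : Module.Projective A (Fin n → A)), hf⟩)
  refine ⟨P, ρ, hP, hρ, fun X g hg => ?_⟩
  by_contra hg0
  set ι := (LinearMap.ker g).subtype with hι
  have hs : Function.Surjective (ρ ∘ₗ ι) := by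
    intro w
    obtain ⟨x, rfl⟩ := hρ w
    have hx : g x ∈ (LinearMap.ker ρ).map g := by rw [hg]; exact ⟨x, rfl⟩
    obtain ⟨y, hy, hxy⟩ := hx
    have hy0 : ρ y = 0 := hy
    refine ⟨⟨x - y, ?_⟩, ?_⟩
    · rw [LinearMap.mem_ker, map_sub, hxy, sub_self]
    · change ρ (x - y) = ρ x
      rw [map_sub, hy0, sub_zero]
  obtain ⟨φ, hφ⟩ := Module.projective_lifting_property (ρ ∘ₗ ι) ρ hs
  obtain ⟨R, i, r, hri, hρr, hlt⟩ := fitting ρ (ι ∘ₗ φ) hφ (by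
    intro hi
    apply hg0
    ext x
    obtain ⟨y, rfl⟩ := surj_of_inj _ hi x
    exact (φ y).2)
  have := hmin R ⟨ρ ∘ₗ i, Module.Projective.of_split i r hri, fun w => by
    obtain ⟨x, rfl⟩ := hρ w
    exact ⟨r x, LinearMap.congr_fun hρr x⟩⟩
  omega

theorem extend {T : FDMod k A → Prop} (hT : Tors T) {P P0 X : FDMod k A} (hP : EP T P) (hX : T X)
    (π : P0.carrier →ₗ[A] P.carrier) (hπ : Function.Surjective π)
    (γ : LinearMap.ker π →ₗ[A] X.carrier) :
    ∃ δ : P0.carrier →ₗ[A] X.carrier, δ ∘ₗ (LinearMap.ker π).subtype = γ := by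
  let G : Submodule A (prd P0 X).carrier :=
    LinearMap.range (LinearMap.prod (LinearMap.ker π).subtype (-γ))
  have hG : G ≤ LinearMap.ker (π ∘ₗ LinearMap.fst A P0.carrier X.carrier) := by
    rintro _ ⟨x, rfl⟩
    exact x.2
  let E : FDMod k A := quo (prd P0 X) G
  let g : E.carrier →ₗ[A] P.carrier := G.liftQ (π ∘ₗ LinearMap.fst A P0.carrier X.carrier) hG
  have hgmk : ∀ y, g (G.mkQ y) = π y.1 := fun y => rfl
  have hgs : Function.Surjective g := by
    intro p
    obtain ⟨x, rfl⟩ := hπ p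
    exact ⟨G.mkQ (x, 0), rfl⟩
  let j : X.carrier →ₗ[A] E.carrier := G.mkQ ∘ₗ LinearMap.inr A P0.carrier X.carrier
  have hj : ∀ x, j x ∈ LinearMap.ker g := fun x => by
    change π 0 = 0
    exact map_zero π
  let j' : X.carrier →ₗ[A] LinearMap.ker g := j.codRestrict _ hj
  have hji : Function.Injective j' := by
    rw [injective_iff_map_eq_zero]
    intro x hx
    have h1 : G.mkQ ((0 : P0.carrier), x) = 0 := congrArg Subtype.val hx
    have h2 : ((0 : P0.carrier), x) ∈ G := by rw [← Submodule.ker_mkQ G]; exact h1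
    obtain ⟨w, hw⟩ := h2
    have h3 : (w : P0.carrier) = 0 := congrArg Prod.fst hw
    have h4 : -γ w = x := congrArg Prod.snd hw
    rw [← h4, Subtype.ext (a1 := w) (a2 := 0) h3, map_zero, neg_zero]
  have hjs : Function.Surjective j' := by
    rintro ⟨e, he⟩
    obtain ⟨⟨p, x⟩, rfl⟩ := G.mkQ_surjective e
    have hp : π p = 0 := he
    refine ⟨x + γ ⟨p, hp⟩, Subtype.ext ?_⟩
    change G.mkQ ((0 : P0.carrier), x + γ ⟨p, hp⟩) = G.mkQ (p, x)
    rw [← sub_eq_zero, ← map_sub, ← LinearMap.mem_ker, Submodule.ker_mkQ]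
    refine ⟨-⟨p, hp⟩, ?_⟩
    ext <;> simp
  let e := LinearEquiv.ofBijective j' ⟨hji, hjs⟩
  obtain ⟨s, hs⟩ := hP E P g hgs (hT.quot X _ j' hjs hX) LinearMap.id
  let q : P0.carrier →ₗ[A] LinearMap.ker g :=
    (G.mkQ ∘ₗ LinearMap.inl A P0.carrier X.carrier - s ∘ₗ π).codRestrict _ (fun x => by
      have h1 : g (s (π x)) = π x := LinearMap.congr_fun hs (π x)
      rw [LinearMap.mem_ker, LinearMap.sub_apply, map_sub, LinearMap.comp_apply,
        LinearMap.comp_apply, hgmk, h1]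
      exact sub_self _)
  refine ⟨e.symm.toLinearMap ∘ₗ q, LinearMap.ext fun w => ?_⟩
  change e.symm (q w) = γ w
  rw [LinearEquiv.symm_apply_eq]
  apply Subtype.ext
  change G.mkQ ((w : P0.carrier), (0 : X.carrier)) - s (π w) = G.mkQ ((0 : P0.carrier), γ w)
  have hw : π w = 0 := w.2
  rw [hw, map_zero, sub_zero, ← sub_eq_zero, ← map_sub, ← LinearMap.mem_ker, Submodule.ker_mkQ]
  refine ⟨w, ?_⟩
  ext <;> simp

/-- Existence of the additive functional attached to an Ext-projective module. -/
theorem presentation [FiniteDimensional k A] {T : FDMod k A → Prop} (hT : Tors T) {P : FDMod k A}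
    (hP : EP T P) :
    ∃ P0 P1 : FDMod k A, Module.Projective A P0.carrier ∧ Module.Projective A P1.carrier ∧
      (∀ X : FDMod k A, T X →
        Module.finrank k (P1.carrier →ₗ[A] X.carrier) +
          Module.finrank k (P.carrier →ₗ[A] X.carrier) ≤
          Module.finrank k (P0.carrier →ₗ[A] X.carrier)) ∧
      (∀ X : FDMod k A, (∀ f : P.carrier →ₗ[A] X.carrier, f = 0) →
        Module.finrank k (P0.carrier →ₗ[A] X.carrier) ≤
          Module.finrank k (P1.carrier →ₗ[A] X.carrier)) := by
  obtain ⟨P0, π, hP0, hπ, -⟩ := proj_cover P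
  obtain ⟨P1, ρ, hP1, hρ, hmin⟩ := proj_cover (sub P0 (LinearMap.ker π))
  set ι := (LinearMap.ker π).subtype with hι
  refine ⟨P0, P1, hP0, hP1, fun X hX => ?_, fun X hX => ?_⟩
  · have key : ∀ (n : ℕ) (g : P1.carrier →ₗ[A] X.carrier), dm (sub X (LinearMap.range g)) ≤ n →
        ∃ h : P0.carrier →ₗ[A] X.carrier, h ∘ₗ ι ∘ₗ ρ = g := by
      intro n
      induction n using Nat.strong_induction_on with
      | _ n ih =>
      intro g hgn
      by_cases hg0 : g = 0
      · exact ⟨0, by rw [hg0, LinearMap.zero_comp]⟩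
      set M := (LinearMap.ker ρ).map g with hM
      have hMlt : M < LinearMap.range g := lt_of_le_of_ne
        (by rintro _ ⟨x, _, rfl⟩; exact ⟨x, rfl⟩) (fun h => hg0 (hmin X g h))
      obtain ⟨γ, hγ⟩ := factor (X := P1) (Y := sub P0 (LinearMap.ker π)) (Z := quo X M) ρ hρ
        (M.mkQ ∘ₗ g) (fun x hx => by
          rw [LinearMap.mem_ker, LinearMap.comp_apply, ← LinearMap.mem_ker, Submodule.ker_mkQ]
          exact ⟨x, hx, rfl⟩)
      obtain ⟨δ, hδ⟩ := extend hT (X := quo X M) hP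
        (hT.quot X _ M.mkQ M.mkQ_surjective hX) π hπ γ
      obtain ⟨h, hh⟩ := Module.projective_lifting_property M.mkQ δ M.mkQ_surjective
      have hr : LinearMap.range (g - h ∘ₗ ι ∘ₗ ρ) ≤ M := by
        rintro _ ⟨x, rfl⟩
        rw [← Submodule.ker_mkQ M, LinearMap.mem_ker]
        have h1 := LinearMap.congr_fun hγ x
        have h2 := LinearMap.congr_fun hδ (ρ x)
        have h3 := LinearMap.congr_fun hh (ι (ρ x))
        simp only [LinearMap.comp_apply] at h1 h2 h3
        rw [LinearMap.sub_apply, map_sub, LinearMap.comp_apply, LinearMap.comp_apply, h3, h2, h1,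
          sub_self]
      have hlt : dm (sub X (LinearMap.range (g - h ∘ₗ ι ∘ₗ ρ))) < n := by
        refine lt_of_lt_of_le ?_ hgn
        have hl : (LinearMap.range (g - h ∘ₗ ι ∘ₗ ρ)).restrictScalars k <
            (LinearMap.range g).restrictScalars k :=
          have hl0 : LinearMap.range (g - h ∘ₗ ι ∘ₗ ρ) < LinearMap.range g :=
            lt_of_le_of_lt hr hMlt
          ⟨hl0.1, hl0.2⟩
        exact Submodule.finrank_lt_finrank_of_lt hl
      obtain ⟨h', hh'⟩ := ih _ hlt _ le_rfl
      refine ⟨h' + h, ?_⟩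
      rw [LinearMap.add_comp, hh', sub_add_cancel]
    let D : (P0.carrier →ₗ[A] X.carrier) →ₗ[k] (P1.carrier →ₗ[A] X.carrier) :=
      LinearMap.lcomp k X.carrier (ι ∘ₗ ρ)
    have hD : Function.Surjective D := fun g => by
      obtain ⟨h, hh⟩ := key _ g le_rfl
      exact ⟨h, hh⟩
    let I : (P.carrier →ₗ[A] X.carrier) →ₗ[k] (P0.carrier →ₗ[A] X.carrier) :=
      LinearMap.lcomp k X.carrier π
    have hI : Function.Injective I := fun a b hab => by
      refine LinearMap.ext fun y => ?_
      obtain ⟨x, rfl⟩ := hπ y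
      exact LinearMap.congr_fun hab x
    have h1 := LinearMap.finrank_range_add_finrank_ker D
    rw [LinearMap.range_eq_top.2 hD, finrank_top] at h1
    have h2 := LinearMap.finrank_range_of_inj hI
    have h3 : LinearMap.range I ≤ LinearMap.ker D := by
      rintro _ ⟨f, rfl⟩
      rw [LinearMap.mem_ker]
      refine LinearMap.ext fun x => ?_
      have hx : π (ρ x : P0.carrier) = 0 := (ρ x).2
      change f (π (ρ x : P0.carrier)) = 0
      rw [hx, map_zero]
    have h4 := Submodule.finrank_mono h3
    omega
  · let D : (P0.carrier →ₗ[A] X.carrier) →ₗ[k] (P1.carrier →ₗ[A] X.carrier) :=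
      LinearMap.lcomp k X.carrier (ι ∘ₗ ρ)
    have hD : Function.Injective D := by
      rw [injective_iff_map_eq_zero]
      intro f hf
      obtain ⟨w, hw⟩ := factor (X := P0) (Y := P) (Z := X) π hπ f (fun x hx => by
        obtain ⟨y, hy⟩ := hρ ⟨x, hx⟩
        have h1 : f (ρ y : P0.carrier) = 0 := LinearMap.congr_fun hf y
        rw [hy] at h1
        exact h1)
      rw [← hw, hX w, LinearMap.zero_comp]
    exact LinearMap.finrank_le_finrank_of_injective hD

/-- The dimension vector, indexed by all projectives. -/
noncomputable def dv (X : FDMod k A) :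
    {Q : FDMod k A // Module.Projective A Q.carrier} → ℚ :=
  fun Q => Module.finrank k (Q.1.carrier →ₗ[A] X.carrier)

theorem dv_add (X : FDMod k A) (S : Submodule A X.carrier) :
    dv X = dv (sub X S) + dv (quo X S) := by
  funext Q
  obtain ⟨Q, hQ⟩ := Q
  let D : (Q.carrier →ₗ[A] X.carrier) →ₗ[k] (Q.carrier →ₗ[A] (quo X S).carrier) :=
    { toFun := fun f => S.mkQ ∘ₗ f
      map_add' := fun f g => by rw [LinearMap.comp_add]
      map_smul' := fun c f => rfl }
  let I : (Q.carrier →ₗ[A] (sub X S).carrier) →ₗ[k] (Q.carrier →ₗ[A] X.carrier) :=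
    { toFun := fun f => S.subtype ∘ₗ f
      map_add' := fun f g => by rw [LinearMap.comp_add]
      map_smul' := fun c f => rfl }
  have hD : Function.Surjective D := fun g =>
    Module.projective_lifting_property S.mkQ g S.mkQ_surjective
  have hI : Function.Injective I := fun a b hab => by
    refine LinearMap.ext fun y => Subtype.ext ?_
    exact LinearMap.congr_fun hab y
  have h1 := LinearMap.finrank_range_add_finrank_ker D
  rw [LinearMap.range_eq_top.2 hD, finrank_top] at h1
  have h2 := LinearMap.finrank_range_of_inj hI
  have h3 : LinearMap.range I = LinearMap.ker D := by
    apply le_antisymm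
    · rintro _ ⟨f, rfl⟩
      rw [LinearMap.mem_ker]
      refine LinearMap.ext fun x => ?_
      change S.mkQ (f x : X.carrier) = 0
      simp
    · intro f hf
      have hf' : ∀ x, f x ∈ S := fun x => by
        rw [← Submodule.ker_mkQ S]; exact LinearMap.congr_fun hf x
      exact ⟨f.codRestrict S hf', rfl⟩
  rw [← h3, h2] at h1
  change ((Module.finrank k (Q.carrier →ₗ[A] X.carrier) : ℕ) : ℚ) =
    (Module.finrank k (Q.carrier →ₗ[A] (sub X S).carrier) : ℕ) +
    (Module.finrank k (Q.carrier →ₗ[A] (quo X S).carrier) : ℕ)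
  rw [← h1]
  push_cast
  ring

theorem dv_iso {X Y : FDMod k A} (h : X.Iso Y) : dv X = dv Y := by
  obtain ⟨e⟩ := h
  funext Q
  let I : (Q.1.carrier →ₗ[A] X.carrier) →ₗ[k] (Q.1.carrier →ₗ[A] Y.carrier) :=
    { toFun := fun f => e.toLinearMap ∘ₗ f
      map_add' := fun f g => by rw [LinearMap.comp_add]
      map_smul' := fun c f => by
        refine LinearMap.ext fun x => ?_
        exact LinearMap.map_smul_of_tower e.toLinearMap c (f x) }
  have hI : Function.Bijective I := by
    constructor
    · intro a b hab
      exact LinearMap.ext fun x => e.injective (LinearMap.congr_fun hab x)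
    · intro g
      refine ⟨e.symm.toLinearMap ∘ₗ g, LinearMap.ext fun x => ?_⟩
      exact e.apply_symm_apply (g x)
  have := (LinearEquiv.ofBijective I hI).finrank_eq
  simp only [dv]
  rw [this]

theorem dv_mem {n : ℕ} (S : Fin n → FDMod k A)
    (hS : ∀ T : FDMod k A, IsSimpleModule A T.carrier → ∃ i, T.Iso (S i)) (X : FDMod k A) :
    dv X ∈ Submodule.span ℚ (Set.range (fun i => dv (S i))) := by
  induction hd : dm X using Nat.strong_induction_on generalizing X with
  | _ d ih =>
  rcases subsingleton_or_nontrivial X.carrier with hX | hX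
  · have : dv X = 0 := by
      funext Q
      have : Subsingleton (Q.1.carrier →ₗ[A] X.carrier) :=
        ⟨fun f g => LinearMap.ext fun x => Subsingleton.elim _ _⟩
      simp [dv, Module.finrank_zero_of_subsingleton]
    rw [this]
    exact zero_mem _
  · have := artin X
    obtain ⟨m, hm⟩ := IsAtomic.exists_atom (Submodule A X.carrier)
    have hsimple : IsSimpleModule A m := isSimpleModule_iff_isAtom.2 hm
    rw [dv_add X m]
    refine add_mem ?_ ?_
    · obtain ⟨i, hi⟩ := hS (sub X m) hsimple
      rw [dv_iso hi]
      exact Submodule.subset_span ⟨i, rfl⟩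
    · refine ih (dm (quo X m)) ?_ (quo X m) rfl
      have h1 := Submodule.finrank_quotient_add_finrank (m.restrictScalars k)
      have h2 : 0 < Module.finrank k (m.restrictScalars k) := by
        have : Nontrivial m := IsSimpleModule.nontrivial A m
        exact Module.finrank_pos (R := k) (M := m)
      rw [← hd]
      change Module.finrank k (X.carrier ⧸ m.restrictScalars k) < _
      change _ < Module.finrank k X.carrier
      omega

theorem main [IsAlgClosed k] [FiniteDimensional k A] (n : ℕ) (hrank : HasRank k A n)
    (hbf : BrickFinite k A) (Y : Fin (n + 1) → FDMod k A) (hY : HomOrthFamily Y) : False := by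
  obtain ⟨S, -, -, hS⟩ := hrank
  obtain ⟨hnt, -, horth⟩ := hY
  have hfin := finite_tors hbf
  have hdep : ¬ LinearIndependent ℚ (fun i => dv (Y i)) := by
    intro hli
    haveI : Fintype (Set.range (fun i => dv (S i))) := Fintype.ofFinite _
    have h1 := linearIndependent_le_span' _ hli (Set.range (fun i => dv (S i))) (by
      rintro _ ⟨i, rfl⟩
      exact dv_mem S hS (Y i))
    have h2 : Fintype.card (Set.range (fun i => dv (S i))) ≤ n := by
      have := Fintype.card_le_of_surjective (Set.rangeFactorization (fun i => dv (S i)))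
        Set.rangeFactorization_surjective
      simpa only [Fintype.card_fin] using this
    simp only [Cardinal.mk_fin] at h1
    have h3 : n + 1 ≤ Fintype.card (Set.range (fun i => dv (S i))) := by exact_mod_cast h1
    omega
  rw [Fintype.not_linearIndependent_iff] at hdep
  have hpos : ∃ c : Fin (n + 1) → ℚ, ∑ i, c i • dv (Y i) = 0 ∧ ∃ i, 0 < c i := by
    obtain ⟨c, hc, i, hi⟩ := hdep
    rcases lt_or_gt_of_ne hi with h | h
    · refine ⟨-c, ?_, i, by simpa using h⟩
      simp only [Pi.neg_apply, neg_smul, Finset.sum_neg_distrib, hc, neg_zero]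
    · exact ⟨c, hc, i, h⟩
  obtain ⟨c, hc, i₀, hi₀⟩ := hpos
  let N : {j // c j < 0} → FDMod k A := fun j => Y j.1
  have hT := tors_lperp N
  have hYT : ∀ i, 0 < c i → LPerp N (Y i) := by
    intro i hi j f
    exact (horth i j.1 (fun h => by have := j.2; rw [← h] at this; linarith)).1 f
  obtain ⟨P, p, hTP, hEP, hp, -⟩ := enough_all hfin hT (Y i₀) (hYT i₀ hi₀)
  obtain ⟨P0, P1, hP0, hP1, hA, hB⟩ := presentation hT hEP
  have h0 := congrFun hc ⟨P0, hP0⟩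
  have h1 := congrFun hc ⟨P1, hP1⟩
  simp only [Finset.sum_apply, Pi.smul_apply, smul_eq_mul, Pi.zero_apply] at h0 h1
  have hsum : ∑ i, c i * (dv (Y i) ⟨P0, hP0⟩ - dv (Y i) ⟨P1, hP1⟩) = 0 := by
    simp only [mul_sub, Finset.sum_sub_distrib, h0, h1, sub_zero]
  have hge : ∀ i, 0 < c i → (Module.finrank k (P.carrier →ₗ[A] (Y i).carrier) : ℚ) ≤
      dv (Y i) ⟨P0, hP0⟩ - dv (Y i) ⟨P1, hP1⟩ := by
    intro i hi
    have := hA (Y i) (hYT i hi)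
    have h2 : ((Module.finrank k (P1.carrier →ₗ[A] (Y i).carrier) +
          Module.finrank k (P.carrier →ₗ[A] (Y i).carrier) : ℕ) : ℚ) ≤
          (Module.finrank k (P0.carrier →ₗ[A] (Y i).carrier) : ℕ) := by exact_mod_cast this
    push_cast at h2
    simp only [dv]
    linarith
  have hpos0 : 0 < Module.finrank k (P.carrier →ₗ[A] (Y i₀).carrier) := by
    have hne : p ≠ 0 := by
      rintro rfl
      obtain ⟨y, hy⟩ := @exists_ne _ (hnt i₀) (0 : (Y i₀).carrier)
      obtain ⟨x, hx⟩ := hp y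
      exact hy hx.symm
    have : Nontrivial (P.carrier →ₗ[A] (Y i₀).carrier) := ⟨⟨p, 0, hne⟩⟩
    exact Module.finrank_pos
  have hgt : 0 < ∑ i, c i * (dv (Y i) ⟨P0, hP0⟩ - dv (Y i) ⟨P1, hP1⟩) := by
    refine Finset.sum_pos' (fun i _ => ?_) ⟨i₀, Finset.mem_univ _, ?_⟩
    · rcases lt_trichotomy (c i) 0 with h | h | h
      · refine mul_nonneg_of_nonpos_of_nonpos h.le ?_
        have h2 := hB (Y i) (fun f => hTP ⟨i, h⟩ f)
        have h3 : (Module.finrank k (P0.carrier →ₗ[A] (Y i).carrier) : ℚ) ≤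
          (Module.finrank k (P1.carrier →ₗ[A] (Y i).carrier) : ℕ) := by exact_mod_cast h2
        simp only [dv]
        linarith
      · rw [h, zero_mul]
      · exact mul_nonneg h.le (le_trans (Nat.cast_nonneg _) (hge i h))
    · exact mul_pos hi₀ (lt_of_lt_of_le (by exact_mod_cast hpos0) (hge i₀ hi₀))
  exact absurd hsum hgt.ne'

end final

end HO

/-- If `A` is a brick-finite finite-dimensional algebra over an
algebraically closed field, of rank `n` (i.e. with exactly `n` isomorphism classes
of simple modules), then every Hom-orthogonal set of finite-dimensional `A`-modules
has at most `n` elements; in particular, there is no Hom-orthogonal set consisting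
of `n + 1` modules. -/
theorem stmt2 {k A : Type u} [Field k] [IsAlgClosed k] [Ring A] [Algebra k A]
    [FiniteDimensional k A] (n : ℕ) (hrank : HasRank k A n) (hbf : BrickFinite k A) :
    (∀ (I : Type v) (X : I → FDMod k A), HomOrthFamily X → ∀ s : Finset I, s.card ≤ n) ∧
    (∀ Y : Fin (n + 1) → FDMod k A, ¬ HomOrthFamily Y) := by

  refine ⟨fun I X hX s => ?_, fun Y hY => HO.main n hrank hbf Y hY⟩
  by_contra hc
  push Not at hc
  obtain ⟨e⟩ : Nonempty (Fin (n + 1) ↪ s) := by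
    rw [Function.Embedding.nonempty_iff_card_le]
    simpa using hc
  have hinj : ∀ i j : Fin (n + 1), i ≠ j → ((e i : I) ≠ e j) :=
    fun i j hij h => hij (e.injective (Subtype.ext h))
  exact HO.main n hrank hbf (fun i => X (e i)) ⟨fun i => hX.1 _,
    fun i j hij => hX.2.1 _ _ (hinj i j hij), fun i j hij => hX.2.2 _ _ (hinj i j hij)⟩
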